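/- (Relaxed Cusa–Huygens-type inequality, trigonometric case.) Let p, q be real with 0 < q and q/(q+1) < p, and let r = pq/(pq + p − q). Then for every y ∈ (0,1), writing x = F_{p,q}(y): y/x < ( (p + r·(1 − y^q)) / (p + r) )^{1/q}. Equivalently, (sin_{p,q} x)/x < ( (p + r·cos_{p,q}^p x)/(p + r) )^{1/q} for all x ∈ (0, π_{p,q}/2). -/

import Mathlib

open MeasureTheory Real

/-!
Put `a = q / (p (q + 1))`, so that `0 < a < 1` and `r / (p + r) = a`; the right-hand side of the
inequality is `(1 - a y ^ q) ^ (1 / q)`. The function `G y = y (1 - a y ^ q) ^ (-1 / q)` has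
derivative `(1 - a y ^ q) ^ (-(q + 1) / q)` (`hasDerivAt_comparison`), and Bernoulli's inequality
`(1 - s) ^ a < 1 - a s` raised to the power `-(q + 1) / q` says exactly that this derivative is
smaller than the integrand `(1 - y ^ q) ^ (-1 / p)` (`comparison_deriv_lt`). Integrating from `0`
to `y` gives `G y < F y`, which is the claim.
-/

lemma one_sub_mul_rpow_pos {a q t : ℝ} (hq : 0 < q) (ha0 : 0 < a) (ha1 : a < 1)
    (ht0 : 0 ≤ t) (ht1 : t < 1) : 0 < 1 - a * t ^ q := by
  have h0 : 0 ≤ t ^ q := rpow_nonneg ht0 q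
  have h1 : t ^ q < 1 := rpow_lt_one ht0 ht1 hq
  nlinarith

/-- The product rule gives `(1 - a t ^ q) ^ (-1 / q - 1)` times `(1 - a t ^ q) + a t ^ q = 1`.
The point `t = 0` is excluded because `t ^ q` need not be differentiable there. -/
lemma hasDerivAt_comparison {a q t : ℝ} (hq : 0 < q) (ha0 : 0 < a) (ha1 : a < 1)
    (ht0 : 0 < t) (ht1 : t < 1) :
    HasDerivAt (fun s : ℝ => s * (1 - a * s ^ q) ^ (-1 / q))
      ((1 - a * t ^ q) ^ (-(q + 1) / q)) t := by
  have hpos := one_sub_mul_rpow_pos hq ha0 ha1 ht0.le ht1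
  have h1 : HasDerivAt (fun s : ℝ => 1 - a * s ^ q) (-(a * (q * t ^ (q - 1)))) t :=
    ((hasDerivAt_rpow_const (Or.inl ht0.ne')).const_mul a).const_sub 1
  have h2 := (hasDerivAt_id t).mul (h1.rpow_const (p := -1 / q) (Or.inl hpos.ne'))
  refine h2.congr_deriv ?_
  have e1 : (-1 / q - 1 : ℝ) = -(q + 1) / q := by field_simp; ring
  have e2 : (1 - a * t ^ q) ^ (-1 / q) = (1 - a * t ^ q) ^ (-(q + 1) / q) * (1 - a * t ^ q) := by
    rw [← rpow_add_one hpos.ne']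
    congr 1
    field_simp
    ring
  have e3 : t ^ q = t ^ (q - 1) * t := by
    rw [← rpow_add_one ht0.ne']
    congr 1
    ring
  simp only [id]
  rw [e1, e2]
  generalize (1 - a * t ^ q) ^ (-(q + 1) / q) = P
  rw [e3]
  field_simp
  ring

/-- Bernoulli's inequality for the exponent `a`, raised to the negative power `-(q + 1) / q`. -/
lemma comparison_deriv_lt {a p q t : ℝ} (hq : 0 < q) (hp : 0 < p) (ha : a = q / (p * (q + 1)))
    (ha0 : 0 < a) (ha1 : a < 1) (ht0 : 0 < t) (ht1 : t < 1) :
    (1 - a * t ^ q) ^ (-(q + 1) / q) < (1 - t ^ q) ^ (-1 / p) := by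
  have h0 : 0 < t ^ q := rpow_pos_of_pos ht0 q
  have h1 : t ^ q < 1 := rpow_lt_one ht0.le ht1 hq
  have hb : (1 + -t ^ q) ^ a < 1 + a * -t ^ q :=
    rpow_one_add_lt_one_add_mul_self (by linarith) (by linarith) ha0 ha1
  have hb' : (1 - t ^ q) ^ a < 1 - a * t ^ q := by
    simpa [sub_eq_add_neg] using hb
  have hs : 0 < 1 - t ^ q := by linarith
  have hexp : -1 / p = a * (-(q + 1) / q) := by
    rw [ha]; field_simp
  rw [hexp, rpow_mul hs.le]
  refine rpow_lt_rpow_of_neg (rpow_pos_of_pos hs a) hb' ?_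
  apply div_neg_of_neg_of_pos <;> linarith

/-- Relaxed Cusa–Huygens-type inequality, trigonometric case: for `0 < q`,
`q/(q+1) < p`, `r = pq/(pq + p - q)`, and every `y ∈ (0,1)`, writing
`x = F_{p,q}(y)`, `y/x < ((p + r·(1 - y^q))/(p + r))^{1/q}`. Equivalently,
`(sin_{p,q} x)/x < ((p + r·cos_{p,q}^p x)/(p + r))^{1/q}` on `(0, π_{p,q}/2)`. -/
theorem cusa_huygens_trig (p q r : ℝ) (hq : 0 < q) (hp : q / (q + 1) < p)
    (hr : r = p * q / (p * q + p - q)) :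
    ∀ y : ℝ, 0 < y → y < 1 →
      y / (∫ t in (0:ℝ)..y, (1 - t ^ q) ^ (-1 / p))
        < ((p + r * (1 - y ^ q)) / (p + r)) ^ (1 / q) := by
  intro y hy0 hy1
  have hp0 : 0 < p := lt_trans (by positivity) hp
  have hpq : q < p * (q + 1) := (div_lt_iff₀ (by linarith)).1 hp
  have hD : 0 < p * q + p - q := by linarith
  have hr0 : 0 < r := by rw [hr]; positivity
  obtain ⟨a, ha⟩ : ∃ a, a = q / (p * (q + 1)) := ⟨_, rfl⟩
  have ha0 : 0 < a := by rw [ha]; positivity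
  have ha1 : a < 1 := by rw [ha, div_lt_one (by positivity)]; exact hpq
  have har : r = a * (p + r) := by
    have h1 : r * (p * q + p - q) = p * q := by rw [hr, div_mul_cancel₀ _ hD.ne']
    rw [ha]
    field_simp
    linarith
  have hbase : (p + r * (1 - y ^ q)) / (p + r) = 1 - a * y ^ q := by
    rw [div_eq_iff (by positivity)]
    linear_combination (-y ^ q) * har
  have hpos : ∀ t ∈ Set.Icc 0 y, 0 < 1 - a * t ^ q := fun t ht =>
    one_sub_mul_rpow_pos hq ha0 ha1 ht.1 (ht.2.trans_lt hy1)
  have hpos' : ∀ t ∈ Set.Icc 0 y, 0 < 1 - t ^ q := fun t ht =>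
    sub_pos.2 (rpow_lt_one ht.1 (ht.2.trans_lt hy1) hq)
  have hcq : Continuous fun t : ℝ => t ^ q := continuous_rpow_const hq.le
  have hcont (e : ℝ) : ContinuousOn (fun t : ℝ => (1 - a * t ^ q) ^ e) (Set.Icc 0 y) :=
    ContinuousOn.rpow_const (by fun_prop) fun t ht => Or.inl (hpos t ht).ne'
  have hcontF : ContinuousOn (fun t : ℝ => (1 - t ^ q) ^ (-1 / p)) (Set.Icc 0 y) :=
    ContinuousOn.rpow_const (by fun_prop) fun t ht => Or.inl (hpos' t ht).ne'
  have hG : ∫ t in (0:ℝ)..y, (1 - a * t ^ q) ^ (-(q + 1) / q)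
      = y * (1 - a * y ^ q) ^ (-1 / q) := by
    rw [intervalIntegral.integral_eq_sub_of_hasDerivAt_of_le hy0.le
      (continuousOn_id.mul (hcont (-1 / q)))
      (fun t ht => hasDerivAt_comparison hq ha0 ha1 ht.1 (ht.2.trans hy1))
      ((hcont _).intervalIntegrable_of_Icc hy0.le)]
    simp
  have hlt : y * (1 - a * y ^ q) ^ (-1 / q) < ∫ t in (0:ℝ)..y, (1 - t ^ q) ^ (-1 / p) := by
    rw [← hG]
    exact intervalIntegral.integral_lt_integral_of_continuousOn_of_le_of_exists_lt hy0
      (hcont _) hcontF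
      (fun t ht => (comparison_deriv_lt hq hp0 ha ha0 ha1 ht.1 (ht.2.trans_lt hy1)).le)
      ⟨y, ⟨hy0.le, le_rfl⟩, comparison_deriv_lt hq hp0 ha ha0 ha1 hy0 hy1⟩
  have hy : 0 < 1 - a * y ^ q := hpos y ⟨hy0.le, le_rfl⟩
  have hP : 0 < (1 - a * y ^ q) ^ (1 / q) := rpow_pos_of_pos hy _
  rw [neg_div, rpow_neg hy.le, ← div_eq_mul_inv, div_lt_iff₀ hP] at hlt
  have hF : 0 < ∫ t in (0:ℝ)..y, (1 - t ^ q) ^ (-1 / p) :=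
    pos_of_mul_pos_left (hy0.trans hlt) hP.le
  rw [hbase, div_lt_iff₀ hF, mul_comm]
  exact hlt
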